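/- arXiv:1502.03065 — 2 statements merged into one kernel-verified Lean document; each statement's English description precedes it below -/
import Mathlib

section
/- Let A be a finite alphabet and let P be the element of the incidence algebra I(A*) over ℚ defined by P(u,v) = binom(v,u). Then P is invertible in I(A*) and its inverse satisfies P^{−1}(u,v) = (−1)^{|v|−|u|} · binom(v,u) for all u ≤ v. Equivalently, for all words u ≤ v, ∑_{u ≤ w ≤ v} (−1)^{|u|+|w|} · binom(w,u) · binom(v,w) = δ(u,v), where δ(u,v) = 1 if u = v and 0 otherwise. -/
/-- `subwordCount v u` is the number of occurrences of `u` as a (scattered) subword of `v`,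
i.e. the number of strictly increasing maps `φ` from the positions of `u` to the positions of
`v` matching the letters. -/
def subwordCount {A : Type*} [DecidableEq A] (v u : List A) : ℕ :=
  ((Finset.univ : Finset (Fin u.length → Fin v.length)).filter
    (fun φ => (∀ i j : Fin u.length, i < j → φ i < φ j) ∧
      ∀ i : Fin u.length, u.get i = v.get (φ i))).card

/-- The identity `δ` of the incidence algebra `I(A*)` over `ℚ`. -/
def deltaW {A : Type*} [DecidableEq A] (u v : List A) : ℚ := if u = v then 1 else 0

/-- Convolution in the incidence algebra `I(A*)` of words under the subword order:
`(FG)(u,v) = ∑_{u ≤ z ≤ v} F(u,z)·G(z,v)`.  The words `z` with `u ≤ z ≤ v` are exactly the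
sublists `z` of `v` with `subwordCount z u > 0`. -/
def convW {A : Type*} [DecidableEq A] (F G : List A → List A → ℚ) (u v : List A) : ℚ :=
  ∑ z ∈ v.sublists.toFinset.filter (fun z => 0 < subwordCount z u), F u z * G z v

/-- Convolution powers, with `F ^ 0 = δ`. -/
def convPowW {A : Type*} [DecidableEq A] (F : List A → List A → ℚ) :
    ℕ → List A → List A → ℚ
  | 0 => deltaW
  | ℓ + 1 => convW F (convPowW F ℓ)

/-- The element `H` of `I(A*)`: `H(u,v) = binom(v,u)` if `|v| = |u| + 1`, else `0`. -/
def HW {A : Type*} [DecidableEq A] (u v : List A) : ℚ :=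
  if v.length = u.length + 1 then (subwordCount v u : ℚ) else 0

/-- The element `P` of `I(A*)`: `P(u,v) = binom(v,u)`. -/
def PW {A : Type*} [DecidableEq A] (u v : List A) : ℚ := subwordCount v u

/-- The claimed inverse of `P`: `P⁻¹(u,v) = (−1)^{|v|−|u|} · binom(v,u)`. -/
def PWinv {A : Type*} [DecidableEq A] (u v : List A) : ℚ :=
  (-1 : ℚ) ^ (v.length - u.length) * subwordCount v u

def occSet {A : Type*} [DecidableEq A] {m n : ℕ} (g : Fin m → A) (f : Fin n → A) :
    Finset (Fin n → Fin m) :=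
  Finset.univ.filter (fun φ => (∀ i j, i < j → φ i < φ j) ∧ ∀ i, f i = g (φ i))

theorem mem_occSet {A : Type*} [DecidableEq A] {m n : ℕ} (g : Fin m → A) (f : Fin n → A)
    (φ : Fin n → Fin m) :
    φ ∈ occSet g f ↔ (∀ i j, i < j → φ i < φ j) ∧ ∀ i, f i = g (φ i) := by
  simp [occSet]

theorem exists_succ_comp {m n : ℕ} (φ : Fin n → Fin (m+1)) (h : ∀ i, φ i ≠ 0) :
    ∃ ψ : Fin n → Fin m, φ = fun i => (ψ i).succ :=
  ⟨fun i => (φ i).pred (h i), by ext i; simp⟩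

theorem occSet_rec {A : Type*} [DecidableEq A] {m n : ℕ} (g : Fin (m+1) → A)
    (f : Fin (n+1) → A) :
    (occSet g f).card = (occSet (fun i => g i.succ) f).card +
      if f 0 = g 0 then (occSet (fun i => g i.succ) (fun i => f i.succ)).card else 0 := by
  have e : occSet g f = (occSet (fun i => g i.succ) f).image (fun ψ i => (ψ i).succ) ∪
      (if f 0 = g 0 then (occSet (fun i => g i.succ) (fun i => f i.succ)).image
        (fun ψ => (Fin.cons 0 (fun i => (ψ i).succ) : Fin (n+1) → Fin (m+1))) else ∅) := by
    ext φ
    simp only [Finset.mem_union, Finset.mem_image]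
    constructor
    · intro h
      rw [mem_occSet] at h
      obtain ⟨h1, h2⟩ := h
      by_cases h0 : φ 0 = 0
      · right
        have hfg : f 0 = g 0 := by rw [h2 0, h0]
        obtain ⟨ψ, hψ⟩ := exists_succ_comp (fun i : Fin n => φ i.succ) (fun i => by
          have := h1 0 i.succ (Fin.succ_pos i)
          rw [h0] at this
          exact this.ne')
        have hψ' : ∀ i, φ i.succ = (ψ i).succ := fun i => congrFun hψ i
        rw [if_pos hfg, Finset.mem_image]
        refine ⟨ψ, ?_, ?_⟩
        · rw [mem_occSet]
          refine ⟨fun i j hij => ?_, fun i => ?_⟩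
          · have := h1 i.succ j.succ (Fin.succ_lt_succ_iff.2 hij)
            rw [hψ', hψ'] at this
            exact Fin.succ_lt_succ_iff.1 this
          · rw [h2 i.succ, hψ']
        · funext i
          refine Fin.cases ?_ (fun i => ?_) i
          · simp [h0]
          · simp [hψ']
      · left
        obtain ⟨ψ, hψ⟩ := exists_succ_comp φ (fun i => by
          refine Fin.cases h0 (fun i => ?_) i
          have := h1 0 i.succ (Fin.succ_pos i)
          exact (lt_of_le_of_lt (Fin.zero_le _) this).ne')
        subst hψ
        refine ⟨ψ, ?_, rfl⟩
        rw [mem_occSet]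
        exact ⟨fun i j hij => Fin.succ_lt_succ_iff.1 (h1 i j hij), h2⟩
    · rintro (⟨ψ, h, rfl⟩ | h)
      · rw [mem_occSet] at h ⊢
        exact ⟨fun i j hij => Fin.succ_lt_succ_iff.2 (h.1 i j hij), h.2⟩
      · split_ifs at h with hfg
        · rw [Finset.mem_image] at h
          obtain ⟨ψ, h, rfl⟩ := h
          rw [mem_occSet] at h ⊢
          obtain ⟨h1, h2⟩ := h
          refine ⟨fun i j => ?_, fun i => ?_⟩
          · refine Fin.cases ?_ (fun i => ?_) i <;> refine Fin.cases ?_ (fun j => ?_) j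
            · simp
            · simp
            · simp
            · intro hij
              simpa using h1 i j (Fin.succ_lt_succ_iff.1 hij)
          · refine Fin.cases ?_ (fun i => ?_) i
            · simpa using hfg
            · simpa using h2 i
        · simp at h
  rw [e, Finset.card_union_of_disjoint, Finset.card_image_of_injective]
  · congr 1
    split_ifs
    · rw [Finset.card_image_of_injective]
      intro ψ ψ' h
      funext i
      have := congrFun h i.succ
      simpa using this
    · simp
  · intro ψ ψ' h
    funext i
    have := congrFun h i
    simpa using this
  · rw [Finset.disjoint_left]
    intro φ h h'
    split_ifs at h'
    · rw [Finset.mem_image] at h h'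
      obtain ⟨ψ, -, rfl⟩ := h
      obtain ⟨ψ', -, h'⟩ := h'
      have := congrFun h' 0
      simp only [Fin.cons_zero] at this
      exact Fin.succ_ne_zero _ this.symm
    · simp at h'

theorem subwordCount_nil {A : Type*} [DecidableEq A] (v : List A) : subwordCount v [] = 1 := by
  have : (occSet v.get ([] : List A).get).card = 1 := by
    have e : occSet v.get ([] : List A).get = Finset.univ := by
      ext φ
      rw [mem_occSet]
      simp only [Finset.mem_univ, iff_true]
      exact ⟨fun i => i.elim0, fun i => i.elim0⟩
    rw [e, Finset.card_univ]
    simp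
  exact this

theorem subwordCount_nil_cons {A : Type*} [DecidableEq A] (a : A) (u : List A) :
    subwordCount [] (a :: u) = 0 := by
  unfold subwordCount
  rw [Finset.card_eq_zero]
  ext φ
  exact (φ ⟨0, by simp⟩).elim0

theorem subwordCount_cons_cons {A : Type*} [DecidableEq A] (a b : A) (u v : List A) :
    subwordCount (b :: v) (a :: u) =
      subwordCount v (a :: u) + if a = b then subwordCount v u else 0 :=
  occSet_rec (b :: v).get (a :: u).get

theorem subwordCount_eq {A : Type*} [DecidableEq A] (v u : List A) :
    subwordCount v u = v.sublists'.count u := by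
  induction v generalizing u with
  | nil =>
    cases u with
    | nil => simp [subwordCount_nil]
    | cons a u => simp [subwordCount_nil_cons]
  | cons b v ih =>
    rw [List.sublists'_cons, List.count_append]
    cases u with
    | nil =>
      rw [← ih, subwordCount_nil, subwordCount_nil, List.count_eq_zero_of_not_mem]
      simp
    | cons a u =>
      rw [subwordCount_cons_cons, ih, ih]
      congr 1
      split_ifs with h
      · subst h
        exact (List.count_map_of_injective _ _ (List.cons_injective) _).symm
      · rw [List.count_eq_zero_of_not_mem]
        simp only [List.mem_map, not_exists, not_and]
        intro x _ hx
        injection hx with h1 _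
        exact h h1.symm

theorem altsum {A : Type*} [DecidableEq A] (v u : List A) :
    (v.sublists'.map (fun w => (-1 : ℚ) ^ w.length * subwordCount w u)).sum =
      if u = v then (-1 : ℚ) ^ u.length else 0 := by
  induction v generalizing u with
  | nil =>
    cases u with
    | nil => simp [subwordCount_nil]
    | cons a u => simp [subwordCount_nil_cons]
  | cons b v ih =>
    rw [List.sublists'_cons, List.map_append, List.sum_append, List.map_map, ih]
    cases u with
    | nil =>
      have := ih []
      simp only [subwordCount_nil] at this
      have e : ((fun w => (-1 : ℚ) ^ w.length * (subwordCount w [] : ℚ)) ∘ List.cons b) =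
          fun w : List A => (-1) * ((-1 : ℚ) ^ w.length * ((1 : ℕ) : ℚ)) := by
        funext w
        simp [subwordCount_nil, pow_succ]
      rw [e, List.sum_map_mul_left, this]
      simp only [reduceCtorEq, if_false]
      ring
    | cons a u =>
      have e : ((fun w => (-1 : ℚ) ^ w.length * (subwordCount w (a :: u) : ℚ)) ∘ List.cons b) =
          fun w : List A => (-1) * ((-1 : ℚ) ^ w.length * (subwordCount w (a :: u) : ℚ)) +
            (if a = b then -1 else 0) * ((-1 : ℚ) ^ w.length * (subwordCount w u : ℚ)) := by
        funext w
        simp only [Function.comp, subwordCount_cons_cons, List.length_cons]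
        split_ifs <;> push_cast <;> ring
      rw [e, List.sum_map_add, List.sum_map_mul_left, List.sum_map_mul_left, ih, ih]
      by_cases hab : a = b
      · by_cases huv : u = v
        · simp [hab, huv, pow_succ]
        · simp only [hab, huv, List.cons.injEq, if_true, if_false, and_false]
          ring
      · simp only [hab, List.cons.injEq, if_false, false_and]
        ring

theorem third {A : Type*} [DecidableEq A] (u v : List A) :
    ∑ w ∈ v.sublists.toFinset.filter (fun w => 0 < subwordCount w u),
        (-1 : ℚ) ^ (u.length + w.length) * subwordCount w u * subwordCount v w
      = deltaW u v := by
  rw [Finset.sum_filter_of_ne]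
  · have e : v.sublists.toFinset = v.sublists'.toFinset := by ext; simp
    have h := altsum v u
    rw [Finset.sum_list_map_count] at h
    have h2 : (-1 : ℚ) ^ u.length * (if u = v then (-1 : ℚ) ^ u.length else 0) = deltaW u v := by
      unfold deltaW
      split_ifs
      · rw [← mul_pow]; simp
      · simp
    rw [e, ← h2, ← h, Finset.mul_sum]
    refine Finset.sum_congr rfl fun w _ => ?_
    have hc : subwordCount v w = @List.count _ instBEqOfDecidableEq w v.sublists' := by
      rw [subwordCount_eq]
      congr 1
      exact lawful_beq_subsingleton _ _
    rw [hc, nsmul_eq_mul, pow_add]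
    ring
  · intro w _ h
    rw [Nat.pos_iff_ne_zero]
    rintro h0
    simp [h0] at h

theorem neg_one_pow_sub' {a b : ℕ} (h : a ≤ b) : (-1 : ℚ) ^ (b - a) = (-1) ^ (a + b) := by
  obtain ⟨c, rfl⟩ := Nat.exists_eq_add_of_le h
  rw [Nat.add_sub_cancel_left, ← add_assoc, pow_add _ (a + a), ← two_mul, pow_mul]
  simp

/-- `P` is invertible in `I(A*)` with two-sided inverse `P⁻¹(u,v) = (−1)^{|v|−|u|}·binom(v,u)`;
equivalently, `∑_{u ≤ w ≤ v} (−1)^{|u|+|w|} · binom(w,u) · binom(v,w) = δ(u,v)`. -/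
theorem PW_inverse {A : Type*} [Fintype A] [DecidableEq A] :
    (∀ u v : List A, convW PW PWinv u v = deltaW u v) ∧
    (∀ u v : List A, convW PWinv PW u v = deltaW u v) ∧
    (∀ u v : List A,
      ∑ w ∈ v.sublists.toFinset.filter (fun w => 0 < subwordCount w u),
        (-1 : ℚ) ^ (u.length + w.length) * subwordCount w u * subwordCount v w
      = deltaW u v) := by
  refine ⟨fun u v => ?_, fun u v => ?_, third⟩
  · have h2 : (-1 : ℚ) ^ (u.length + v.length) * deltaW u v = deltaW u v := by
      unfold deltaW
      split_ifs with h
      · subst h; rw [← two_mul, pow_mul]; simp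
      · simp
    rw [← h2, ← third, Finset.mul_sum]
    refine Finset.sum_congr rfl fun w hw => ?_
    have hl : w.length ≤ v.length := by
      simp only [Finset.mem_filter, List.mem_toFinset, List.mem_sublists] at hw
      exact hw.1.length_le
    unfold PW PWinv
    rw [neg_one_pow_sub' hl]
    have : (-1 : ℚ) ^ u.length * (-1 : ℚ) ^ u.length = 1 := by rw [← mul_pow]; simp
    simp only [pow_add]
    linear_combination (-(-1 : ℚ) ^ v.length * (-1) ^ w.length * subwordCount w u
      * subwordCount v w) * this
  · rw [← third]
    refine Finset.sum_congr rfl fun w hw => ?_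
    have hl : u.length ≤ w.length := by
      have := (Finset.mem_filter.1 hw).2
      rw [subwordCount_eq, List.count_pos_iff, List.mem_sublists'] at this
      exact this.length_le
    unfold PW PWinv
    rw [neg_one_pow_sub' hl]
end

section
/- Let A be a finite alphabet with letters a, c ∈ A. For every word w ∈ A*, the number of occurrences of the two-letter word ac as a factor of w (i.e., the number of indices i with w_i = a and w_{i+1} = c) equals ∑_{v ∈ A*} (−1)^{|v|} · binom(w, avc), where the sum is over all words v (only words v with avc a subword of w contribute, so the sum is finite) and avc denotes the concatenation of the letter a, the word v, and the letter c. -/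
theorem swc_nil_right {A : Type*} [DecidableEq A] (w : List A) : subwordCount w [] = 1 := by
  unfold subwordCount
  rw [Finset.filter_true_of_mem]
  · simp
  · intro φ _
    exact ⟨fun i => i.elim0, fun i => i.elim0⟩

theorem swc_nil_left {A : Type*} [DecidableEq A] (y : A) (u : List A) :
    subwordCount [] (y :: u) = 0 := by
  unfold subwordCount
  rw [Finset.card_eq_zero, Finset.filter_eq_empty_iff]
  intro φ _
  exact (φ ⟨0, by simp⟩).elim0

theorem swc_cons {A : Type*} [DecidableEq A] (x y : A) (w u : List A) :
    subwordCount (x :: w) (y :: u) =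
      subwordCount w (y :: u) + if x = y then subwordCount w u else 0 := by
  unfold subwordCount
  rw [← Finset.card_filter_add_card_filter_not
    (p := fun φ : Fin (y :: u).length → Fin (x :: w).length => φ (0 : Fin (u.length + 1)) ≠ (0 : Fin (w.length + 1)))]
  congr 1
  · symm
    apply Finset.card_bij (fun (ψ : Fin (y :: u).length → Fin w.length) _ =>
      (fun i => (ψ i).succ : Fin (y :: u).length → Fin (x :: w).length))
    · intro ψ hψ
      simp only [Finset.mem_filter, Finset.mem_univ, true_and] at hψ ⊢
      refine ⟨⟨fun i j h => Fin.succ_lt_succ_iff.2 (hψ.1 i j h), fun i => ?_⟩, Fin.succ_ne_zero _⟩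
      rw [hψ.2 i]; rfl
    · intro ψ _ ψ' _ h
      funext i
      exact Fin.succ_injective _ (congrFun h i)
    · intro φ hφ
      simp only [Finset.mem_filter, Finset.mem_univ, true_and] at hφ
      obtain ⟨⟨h1, h2⟩, h3⟩ := hφ
      have hne : ∀ i, (φ i : Fin (w.length + 1)) ≠ 0 := by
        intro i
        rcases Fin.eq_zero_or_eq_succ (n := u.length) i with rfl | ⟨j, rfl⟩
        · exact h3
        · have := h1 (0 : Fin (u.length + 1)) j.succ (Fin.succ_pos j)
          exact Fin.ne_zero_of_lt this
      refine ⟨fun i => Fin.pred (n := w.length) (φ i) (hne i), ?_, ?_⟩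
      · simp only [Finset.mem_filter, Finset.mem_univ, true_and]
        refine ⟨fun i j h => Fin.pred_lt_pred_iff.2 (h1 i j h), fun i => ?_⟩
        rw [h2 i]
        conv_lhs => rw [← Fin.succ_pred (n := w.length) (φ i) (hne i)]
        rfl
      · funext i
        exact Fin.succ_pred (n := w.length) (φ i) (hne i)
  · split_ifs with hxy
    · symm
      apply Finset.card_bij (fun (ψ : Fin u.length → Fin w.length) _ =>
        (Fin.cons (0 : Fin (w.length + 1)) (fun i => (ψ i).succ) :
          Fin (u.length + 1) → Fin (w.length + 1)))
      · intro ψ hψ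
        simp only [Finset.mem_filter, Finset.mem_univ, true_and] at hψ ⊢
        refine ⟨⟨fun i j h => ?_, fun i => ?_⟩, fun h => h rfl⟩
        · rcases Fin.eq_zero_or_eq_succ (n := u.length) j with rfl | ⟨j, rfl⟩
          · exact absurd h (Fin.not_lt_zero i)
          rcases Fin.eq_zero_or_eq_succ (n := u.length) i with rfl | ⟨i, rfl⟩
          · exact Fin.succ_pos _
          · exact Fin.succ_lt_succ_iff.2 (hψ.1 i j (Fin.succ_lt_succ_iff.1 h))
        · rcases Fin.eq_zero_or_eq_succ (n := u.length) i with rfl | ⟨i, rfl⟩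
          · exact hxy.symm
          · exact hψ.2 i
      · intro ψ _ ψ' _ h
        funext i
        exact Fin.succ_injective _ (congrFun h i.succ)
      · intro φ hφ
        simp only [Finset.mem_filter, Finset.mem_univ, true_and, not_not] at hφ
        obtain ⟨⟨h1, h2⟩, h3⟩ := hφ
        have hne : ∀ i : Fin u.length, (φ i.succ : Fin (w.length + 1)) ≠ 0 := by
          intro i
          have := h1 (0 : Fin (u.length + 1)) i.succ (Fin.succ_pos i)
          exact Fin.ne_zero_of_lt this
        refine ⟨fun i => Fin.pred (n := w.length) (φ i.succ) (hne i), ?_, ?_⟩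
        · simp only [Finset.mem_filter, Finset.mem_univ, true_and]
          refine ⟨fun i j h => Fin.pred_lt_pred_iff.2
            (h1 i.succ j.succ (Fin.succ_lt_succ_iff.2 h)), fun i => ?_⟩
          have := h2 i.succ
          rw [← Fin.succ_pred (n := w.length) (φ i.succ) (hne i)] at this
          exact this
        · funext i
          rcases Fin.eq_zero_or_eq_succ (n := u.length) i with rfl | ⟨i, rfl⟩
          · exact h3.symm
          · exact Fin.succ_pred (n := w.length) (φ i.succ) (hne i)
    · rw [Finset.card_eq_zero, Finset.filter_eq_empty_iff]
      intro φ hφ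
      simp only [Finset.mem_filter, Finset.mem_univ, true_and] at hφ
      rw [not_not]
      intro h
      have h2 := hφ.2 (0 : Fin (u.length + 1))
      rw [h] at h2
      exact hxy h2.symm

theorem swc_H {A : Type*} [DecidableEq A] (c : A) (w : List A) :
    ∀ T : Finset (List A), (∀ v, v.Sublist w → v ∈ T) →
      ∑ v ∈ T, (-1 : ℚ) ^ v.length * subwordCount w (v ++ [c]) =
        if w[0]? = some c then 1 else 0 := by
  induction w with
  | nil =>
    intro T _
    simp only [List.getElem?_nil]
    rw [Finset.sum_eq_zero]
    · simp
    · intro v _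
      cases v <;> simp [swc_nil_left]
  | cons x w ih =>
    intro T hT
    let e : List A → ℚ := fun v => match v with
      | [] => if x = c then 1 else 0
      | y :: v => if x = y then -((-1 : ℚ) ^ v.length * subwordCount w (v ++ [c])) else 0
    have h1 : ∀ v, (-1 : ℚ) ^ v.length * subwordCount (x :: w) (v ++ [c]) =
        (-1 : ℚ) ^ v.length * subwordCount w (v ++ [c]) + e v := by
      intro v
      cases v with
      | nil => simp [e, swc_cons, swc_nil_right]
      | cons y v =>
        simp only [e, List.cons_append, swc_cons, List.length_cons]
        split_ifs <;> push_cast <;> ring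
    have hinj : Function.Injective (fun v : List A => x :: v) := fun a b h => by simpa using h
    let T' : Finset (List A) := T.preimage (fun v => x :: v) hinj.injOn
    have h2 : ∑ v ∈ T, e v = ∑ v ∈ insert [] (T'.map ⟨_, hinj⟩), e v := by
      symm
      apply Finset.sum_subset
      · intro v hv
        simp only [Finset.mem_insert, Finset.mem_map, Function.Embedding.coeFn_mk] at hv
        rcases hv with rfl | ⟨v, hv, rfl⟩
        · exact hT _ (List.nil_sublist _)
        · simpa [T'] using hv
      · intro v hv hv'
        cases v with
        | nil => simp at hv'
        | cons y v =>
          simp only [e]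
          rw [if_neg]
          rintro rfl
          apply hv'
          simp [T', hv]
    simp only [h1]
    rw [Finset.sum_add_distrib, ih T (fun v hv => hT v (hv.cons x)), h2,
      Finset.sum_insert (by simp), Finset.sum_map]
    have h3 := ih T' (fun v hv => by simpa [T'] using hT _ (hv.cons_cons x))
    simp only [Function.Embedding.coeFn_mk, e, if_true, Finset.sum_neg_distrib, h3]
    simp

theorem swc_G {A : Type*} [DecidableEq A] (a c : A) (w : List A) :
    ∀ T : Finset (List A), (∀ v, v.Sublist w → v ∈ T) →
      ((((Finset.range w.length).filter
        (fun i => w[i]? = some a ∧ w[i + 1]? = some c)).card : ℚ)) =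
      ∑ v ∈ T, (-1 : ℚ) ^ v.length * subwordCount w (a :: (v ++ [c])) := by
  induction w with
  | nil => intro T _; simp [swc_nil_left]
  | cons x w ih =>
    intro T hT
    have hT' : ∀ v, v.Sublist w → v ∈ T := fun v hv => hT v (hv.cons x)
    have h1 : ∑ v ∈ T, (-1 : ℚ) ^ v.length * subwordCount (x :: w) (a :: (v ++ [c])) =
        ∑ v ∈ T, (-1 : ℚ) ^ v.length * subwordCount w (a :: (v ++ [c])) +
        if x = a then ∑ v ∈ T, (-1 : ℚ) ^ v.length * subwordCount w (v ++ [c]) else 0 := by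
      simp only [swc_cons]
      split_ifs
      · rw [← Finset.sum_add_distrib]
        refine Finset.sum_congr rfl fun v _ => ?_
        push_cast; ring
      · simp
    rw [h1, swc_H c w T hT', ← ih T hT']
    simp only [Finset.card_filter, List.length_cons, Finset.sum_range_succ', Nat.cast_add]
    simp only [List.getElem?_cons_succ, List.getElem?_cons_zero, Option.some.injEq, zero_add]
    congr 1
    by_cases hx : x = a <;> simp [hx]


/-- For letters `a, c` and every word `w`, the number of occurrences of the two-letter word
`ac` as a factor of `w` (the number of indices `i` with `w_i = a` and `w_{i+1} = c`) equals
`∑_v (−1)^{|v|} · binom(w, avc)`, the sum being over all words `v`; only words `v` with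
`avc` a subword of `w` contribute, so it suffices to sum over the (distinct) sublists
of `w`. -/
theorem factor_count_mahler_expansion {A : Type*} [Fintype A] [DecidableEq A]
    (a c : A) (w : List A) :
    ((((Finset.range w.length).filter
        (fun i => w[i]? = some a ∧ w[i + 1]? = some c)).card : ℚ)) =
      ∑ v ∈ w.sublists.toFinset,
        (-1 : ℚ) ^ v.length * subwordCount w (a :: (v ++ [c])) := by
  exact swc_G a c w _ (fun v hv => by simpa using hv)
end
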